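/- Let P and Q be monomial prime ideals of S = K[x_1,...,x_n] generated by disjoint sets of variables with P + Q = (x_1,...,x_n) and ht(P) = r. Then depth_S(P ∩ Q) = 2 and sdepth_S(P ∩ Q) ≥ ⌈r/2⌉ + ⌈(n−r)/2⌉ ≥ 2. -/

import Mathlib

open MvPolynomial

/-- The depth of a module `M` with respect to an ideal `I`: the supremum of
lengths of `M`-regular sequences with entries in `I`. -/
noncomputable def moduleDepth (R : Type*) [CommRing R] (I : Ideal R)
    (M : Type*) [AddCommGroup M] [Module R M] : ℕ :=
  sSup {k | ∃ rs : List R, rs.length = k ∧ (∀ r ∈ rs, r ∈ I) ∧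
    RingTheory.Sequence.IsRegular M rs}

/-- The Stanley space `u·K[Z]`: the `K`-span of all monomials `u·v` with
`v` a monomial in the variables of `Z`. -/
noncomputable def stanleySpace {n : ℕ} (K : Type*) [Field K] (d : Fin n →₀ ℕ)
    (Z : Finset (Fin n)) : Submodule K (MvPolynomial (Fin n) K) :=
  Submodule.span K {f | ∃ e : Fin n →₀ ℕ, (∀ i, e i ≠ 0 → i ∈ Z) ∧
    f = monomial (d + e) (1 : K)}

/-- A Stanley decomposition of a monomial ideal `I`: a finite family of Stanley
spaces `uᵢ·K[Zᵢ]`, with each `uᵢ ∈ I`, which are independent and whose (direct)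
sum is `I` as a `K`-vector space. -/
structure StanleyDecomp {n : ℕ} (K : Type*) [Field K]
    (I : Ideal (MvPolynomial (Fin n) K)) where
  m : ℕ
  u : Fin m → (Fin n →₀ ℕ)
  Z : Fin m → Finset (Fin n)
  mem : ∀ i, monomial (u i) (1 : K) ∈ I
  indep : iSupIndep fun i => stanleySpace K (u i) (Z i)
  total : (⨆ i, stanleySpace K (u i) (Z i)) = Submodule.restrictScalars K I

/-- The Stanley depth of a monomial ideal: the largest `k` such that `I` admits a
Stanley decomposition all of whose Stanley spaces use at least `k` variables. -/
noncomputable def sdepth {n : ℕ} {K : Type*} [Field K]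
    (I : Ideal (MvPolynomial (Fin n) K)) : ℕ :=
  sSup {k | ∃ D : StanleyDecomp K I, ∀ i, k ≤ (D.Z i).card}

/-- `I` is a monomial ideal if it is generated by monomials. -/
def IsMonomialIdeal {n : ℕ} {K : Type*} [Field K]
    (I : Ideal (MvPolynomial (Fin n) K)) : Prop :=
  ∃ G : Set (Fin n →₀ ℕ), I = Ideal.span ((fun d => monomial d (1 : K)) '' G)

/-- The monomial prime ideal generated by the variables in `A`. -/
noncomputable def varIdeal {n : ℕ} (K : Type*) [Field K] (A : Finset (Fin n)) :
    Ideal (MvPolynomial (Fin n) K) :=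
  Ideal.span ((fun i => (X i : MvPolynomial (Fin n) K)) '' ↑A)

/-- The graded maximal ideal `(x_1, …, x_n)`. -/
noncomputable def maxIdeal (n : ℕ) (K : Type*) [Field K] :
    Ideal (MvPolynomial (Fin n) K) :=
  varIdeal K Finset.univ


/-- next colour function -/
def nu (n : ℕ) (p : Bool) (S : Finset ℕ) : ℕ → Bool
  | 0 => p
  | k + 1 => if n - (k + 1) ∈ S then decide ((n - (k+1)) % 2 = 0) else nu n p S k

theorem exists_nu (n : ℕ) (p : Bool) (S : Finset ℕ) :
    ∃ ν : ℕ → Bool, ν n = p ∧ ∀ i < n, ν i = if i ∈ S then decide (i % 2 = 0) else ν (i+1) := by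
  refine ⟨fun i => nu n p S (n - i), by simp [nu], fun i hi => ?_⟩
  obtain ⟨k, rfl⟩ : ∃ k, n = i + (k + 1) := ⟨n - i - 1, by omega⟩
  have e1 : i + (k+1) - i = k + 1 := by omega
  have e2 : i + (k+1) - (i+1) = k := by omega
  have e3 : i + (k+1) - (k+1) = i := by omega
  simp only [e1, e2, nu, e3]

/-- admissible colour functions for `S` -/
def Adm (n : ℕ) (S : Finset ℕ) (ν : ℕ → Bool) : Prop :=
  ν 0 = !(ν n) ∧ ∀ i < n, ν i = if i ∈ S then decide (i % 2 = 0) else ν (i+1)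

theorem adm_unique {n : ℕ} {S : Finset ℕ} (hS : S ⊆ Finset.range n) (hne : S.Nonempty)
    {ν μ : ℕ → Bool} (h : Adm n S ν) (h' : Adm n S μ) : ∀ i ≤ n, ν i = μ i := by
  have key : ν 0 = μ 0 := by
    have hm := S.min'_mem hne
    have : ∀ j ≤ S.min' hne, ν j = μ j := by
      intro j hj
      induction hj using Nat.decreasingInduction with
      | self =>
        rw [h.2 _ (Finset.mem_range.1 (hS hm)), h'.2 _ (Finset.mem_range.1 (hS hm))]; simp [hm]
      | of_succ k hk ih =>
        have hkn : k < n := lt_trans hk (Finset.mem_range.1 (hS hm))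
        have hkS : k ∉ S := fun hc => absurd (S.min'_le k hc) (by omega)
        rw [h.2 _ hkn, h'.2 _ hkn]; simp [hkS, ih]
    exact this 0 (Nat.zero_le _)
  have keyn : ν n = μ n := by
    have h1 := h.1
    have h2 := h'.1
    rw [key, h2] at h1
    simpa using h1.symm
  intro i hi
  induction hi using Nat.decreasingInduction with
  | self => exact keyn
  | of_succ k hk ih => rw [h.2 _ hk, h'.2 _ hk, ih]

theorem adm_exists {n : ℕ} {S : Finset ℕ} (hS : S ⊆ Finset.range n) (hne : S.Nonempty) :
    ∃ ν, Adm n S ν := by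
  obtain ⟨ν, h1, h2⟩ := exists_nu n (!decide (S.min' hne % 2 = 0)) S
  refine ⟨ν, ?_, h2⟩
  have hm := S.min'_mem hne
  have : ∀ j ≤ S.min' hne, ν j = decide (S.min' hne % 2 = 0) := by
    intro j hj
    induction hj using Nat.decreasingInduction with
    | self => rw [h2 _ (Finset.mem_range.1 (hS hm))]; simp only [hm, if_true]
    | of_succ k hk ih =>
      have hkn : k < n := lt_trans hk (Finset.mem_range.1 (hS hm))
      have hkS : k ∉ S := fun hc => absurd (S.min'_le k hc) (by omega)
      rw [h2 _ hkn]; simp only [hkS, if_false, ih]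
  rw [this 0 (Nat.zero_le _), h1, Bool.not_not]

theorem adm_card {n : ℕ} {S : Finset ℕ} {ν : ℕ → Bool} (h : Adm n S ν) :
    (n + 1) / 2 ≤ ((Finset.range n).filter fun i => i ∈ S ∨ decide (i % 2 = 0) = ν (i+1)).card := by
  set φ : ℕ → ℤ := fun i => if decide (i % 2 = 0) = ν i then 1 else 0 with hφ
  set Y := (Finset.range n).filter fun i => i ∈ S ∨ decide (i % 2 = 0) = ν (i+1) with hY
  have hc : (Y.card : ℤ) = ∑ i ∈ Finset.range n, if (i ∈ S ∨ decide (i % 2 = 0) = ν (i+1)) then (1:ℤ) else 0 := by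
    rw [hY, Finset.card_filter]; push_cast; rfl
  have hstep : ∀ i ∈ Finset.range n, φ (i+1) - φ i + 2 * (if (i ∈ S ∨ decide (i % 2 = 0) = ν (i+1)) then (1:ℤ) else 0) ≥ 1 := by
    intro i hi
    have := h.2 i (Finset.mem_range.1 hi)
    have hp : decide ((i+1) % 2 = 0) = !decide (i % 2 = 0) := by
      rcases Nat.mod_two_eq_zero_or_one i with h | h <;> simp [h, Nat.add_mod]
    simp only [hφ, hp, this]
    by_cases hi : i ∈ S <;> cases decide (i % 2 = 0) <;> cases ν (i+1) <;> simp [hi]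
  have hs := Finset.sum_le_sum hstep
  rw [Finset.sum_add_distrib, Finset.sum_range_sub, ← Finset.mul_sum, ← hc] at hs
  simp at hs
  have h0 : φ 0 = if ν 0 then 1 else 0 := by simp only [hφ]; cases ν 0 <;> simp
  have hn : φ n ≤ 1 := by simp only [hφ]; split_ifs <;> simp
  have h0' : 0 ≤ φ 0 := by simp only [hφ]; split_ifs <;> simp
  rcases Nat.mod_two_eq_zero_or_one n with hm | hm
  · omega
  · have : φ n = φ 0 := by simp only [hφ, h.1, hm]; cases ν n <;> simp
    omega

theorem adm_trans {n : ℕ} {S T : Finset ℕ} {ν : ℕ → Bool} (h : Adm n S ν)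
    (h1 : ∀ i < n, i ∈ S → decide (i % 2 = 0) ≠ ν (i+1) → i ∈ T)
    (h2 : ∀ i < n, i ∈ T → i ∈ S ∨ decide (i % 2 = 0) = ν (i+1)) : Adm n T ν := by
  refine ⟨h.1, fun i hi => ?_⟩
  rw [h.2 i hi]
  have a := h1 i hi
  have b := h2 i hi
  by_cases hS : i ∈ S <;> by_cases hT : i ∈ T <;> simp_all

theorem interval_nat (n : ℕ) : ∃ X Y : Finset ℕ → Finset ℕ, ∀ S ⊆ Finset.range n, S.Nonempty →
    X S ⊆ S ∧ S ⊆ Y S ∧ Y S ⊆ Finset.range n ∧ (X S).Nonempty ∧ (n+1)/2 ≤ (Y S).card ∧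
    ∀ T, X S ⊆ T → T ⊆ Y S → X T = X S ∧ Y T = Y S := by
  classical
  have hex : ∀ S : Finset ℕ, ∃ ν, S ⊆ Finset.range n → S.Nonempty → Adm n S ν := by
    intro S
    by_cases h : S ⊆ Finset.range n ∧ S.Nonempty
    · obtain ⟨ν, hν⟩ := adm_exists h.1 h.2
      exact ⟨ν, fun _ _ => hν⟩
    · exact ⟨fun _ => true, fun a b => absurd ⟨a, b⟩ h⟩
  choose N hN using hex
  have hnonempty : ∀ T ν, Adm n T ν → (T.filter fun i => i < n ∧ decide (i % 2 = 0) ≠ ν (i+1)).Nonempty := by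
    intro T ν h
    by_contra hc
    rw [Finset.not_nonempty_iff_eq_empty, Finset.filter_eq_empty_iff] at hc
    have : ∀ j ≤ n, ν j = ν n := by
      intro j hj
      induction hj using Nat.decreasingInduction with
      | self => rfl
      | of_succ k hk ih =>
        rw [h.2 k hk]
        split_ifs with hT
        · have := hc hT
          simp only [hk, true_and, not_not] at this
          rw [this, ih]
        · exact ih
    have h0 := h.1
    rw [this 0 (Nat.zero_le _)] at h0
    simp at h0
  refine ⟨fun S => S.filter fun i => i < n ∧ decide (i % 2 = 0) ≠ N S (i+1),
    fun S => (Finset.range n).filter fun i => i ∈ S ∨ decide (i % 2 = 0) = N S (i+1), ?_⟩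
  intro S hS hne
  have hA := hN S hS hne
  refine ⟨Finset.filter_subset _ _, fun i hi => by simp [hi, Finset.mem_range.1 (hS hi)],
    Finset.filter_subset _ _, hnonempty _ _ hA, adm_card hA, ?_⟩
  intro T h1 h2
  have h1' : ∀ i < n, i ∈ S → decide (i % 2 = 0) ≠ N S (i+1) → i ∈ T := fun i hi a b =>
    h1 (Finset.mem_filter.2 ⟨a, hi, b⟩)
  have h2' : ∀ i < n, i ∈ T → i ∈ S ∨ decide (i % 2 = 0) = N S (i+1) := fun i hi a =>
    (Finset.mem_filter.1 (h2 a)).2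
  have hT := adm_trans hA h1' h2'
  have hTn : T ⊆ Finset.range n := h2.trans (Finset.filter_subset _ _)
  have hTne : T.Nonempty := (hnonempty _ _ hT).mono (Finset.filter_subset _ _)
  have hu := adm_unique hTn hTne (hN T hTn hTne) hT
  constructor
  · ext i
    simp only [Finset.mem_filter]
    constructor
    · rintro ⟨a, b, c⟩
      rw [hu _ (by omega)] at c
      exact ⟨(h2' i b a).resolve_right c, b, c⟩
    · rintro ⟨a, b, c⟩
      refine ⟨h1' i b a c, b, ?_⟩
      rwa [hu _ (by omega)]
  · ext i
    simp only [Finset.mem_filter, Finset.mem_range]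
    refine and_congr_right fun b => ?_
    rw [hu _ (by omega)]
    by_cases hc : decide (i % 2 = 0) = N S (i+1)
    · simp only [hc, or_true]
    · simp only [hc, or_false]
      exact ⟨fun a => (h2' i b a).resolve_right hc, fun a => h1' i b a hc⟩

theorem interval_finset {α : Type*} [DecidableEq α] (A : Finset α) :
    ∃ X Y : Finset α → Finset α, ∀ S ⊆ A, S.Nonempty →
    X S ⊆ S ∧ S ⊆ Y S ∧ Y S ⊆ A ∧ (X S).Nonempty ∧ (A.card+1)/2 ≤ (Y S).card ∧
    ∀ T, X S ⊆ T → T ⊆ Y S → X T = X S ∧ Y T = Y S := by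
  classical
  obtain ⟨X, Y, h⟩ := interval_nat A.card
  obtain ⟨g, hg, hgi⟩ : ∃ g : α → ℕ, A.image g = Finset.range A.card ∧ Set.InjOn g A := by
    refine ⟨fun a => if h : a ∈ A then (A.equivFin ⟨a, h⟩ : ℕ) else 0, ?_, ?_⟩
    · ext i
      simp only [Finset.mem_image, Finset.mem_range]
      constructor
      · rintro ⟨a, ha, rfl⟩
        simp [ha]
      · intro hi
        refine ⟨A.equivFin.symm ⟨i, hi⟩, Finset.coe_mem _, by simp⟩
    · intro a ha b hb hab
      have ha' : a ∈ A := ha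
      have hb' : b ∈ A := hb
      simp only [ha', hb', dif_pos] at hab
      have := A.equivFin.injective (Fin.ext hab)
      simpa using this
  have pull : ∀ U ⊆ Finset.range A.card, (A.filter (g · ∈ U)).image g = U := by
    intro U hU
    ext i
    simp only [Finset.mem_image, Finset.mem_filter]
    constructor
    · rintro ⟨a, ⟨_, h⟩, rfl⟩; exact h
    · intro hi
      have := hU hi
      rw [← hg, Finset.mem_image] at this
      obtain ⟨a, ha, rfl⟩ := this
      exact ⟨a, ⟨ha, hi⟩, rfl⟩
  have mem : ∀ S ⊆ A, ∀ a ∈ A, (g a ∈ S.image g ↔ a ∈ S) := by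
    intro S hS a ha
    rw [Finset.mem_image]
    exact ⟨fun ⟨b, hb, e⟩ => hgi (hS hb) ha e ▸ hb, fun h => ⟨a, h, rfl⟩⟩
  refine ⟨fun S => A.filter (g · ∈ X (S.image g)), fun S => A.filter (g · ∈ Y (S.image g)), ?_⟩
  intro S hS hne
  have hSi : S.image g ⊆ Finset.range A.card := hg ▸ Finset.image_subset_image hS
  obtain ⟨a1, a2, a3, a4, a5, a6⟩ := h (S.image g) hSi (hne.image g)
  have hX : X (S.image g) ⊆ Finset.range A.card := a1.trans hSi
  refine ⟨?_, ?_, Finset.filter_subset _ _, ?_, ?_, ?_⟩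
  · intro a ha
    rw [Finset.mem_filter] at ha
    exact (mem S hS a ha.1).1 (a1 ha.2)
  · intro a ha
    exact Finset.mem_filter.2 ⟨hS ha, a2 (Finset.mem_image_of_mem _ ha)⟩
  · rw [← pull _ hX] at a4
    exact a4.of_image
  · rw [← pull _ a3] at a5
    exact a5.trans Finset.card_image_le
  · intro T h1 h2
    have e := a6 (T.image g) (by rw [← pull _ hX]; exact Finset.image_subset_image h1)
      (by rw [← pull _ a3]; exact Finset.image_subset_image h2)
    simp only [e, and_self]

section PrimesAux

variable {n : ℕ} {K : Type*} [Field K]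

theorem mem_varIdeal_iff {A : Finset (Fin n)} {f : MvPolynomial (Fin n) K} :
    f ∈ varIdeal K A ↔ ∀ m ∈ f.support, ∃ i ∈ A, m i ≠ 0 := by
  unfold varIdeal
  rw [MvPolynomial.mem_ideal_span_X_image]
  simp

theorem varIdeal_isPrime (A : Finset (Fin n)) : (varIdeal K A).IsPrime := by
  classical
  let ev : MvPolynomial (Fin n) K →ₐ[K] MvPolynomial (Fin n) K :=
    aeval (fun i => if i ∈ A then 0 else X i)
  have hsub : ∀ f, f - ev f ∈ varIdeal K A := by
    intro f
    induction f using MvPolynomial.induction_on with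
    | C a => simp [ev]
    | add p q hp hq =>
      rw [map_add]
      have := add_mem hp hq
      convert this using 1
      ring
    | mul_X p i hp =>
      rw [map_mul]
      have h2 : X i - ev (X i) ∈ varIdeal K A := by
        by_cases hi : i ∈ A
        · simp only [ev, aeval_X, hi, if_true, sub_zero]
          exact Ideal.subset_span ⟨i, by simpa using hi, rfl⟩
        · simp [ev, hi]
      have := add_mem (Ideal.mul_mem_right (X i) _ hp) (Ideal.mul_mem_left _ (ev p) h2)
      convert this using 1
      ring
  have hker : varIdeal K A = RingHom.ker (ev : MvPolynomial (Fin n) K →+* MvPolynomial (Fin n) K) := by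
    apply le_antisymm
    · unfold varIdeal
      rw [Ideal.span_le]
      rintro _ ⟨i, hi, rfl⟩
      have hi' : i ∈ A := by simpa using hi
      simp [RingHom.mem_ker, ev, hi']
    · intro f hf
      have h1 := hsub f
      have : ev f = 0 := hf
      rwa [this, sub_zero] at h1
  rw [hker]
  exact RingHom.ker_isPrime _

theorem X_mem_varIdeal {A : Finset (Fin n)} {i : Fin n} :
    (X i : MvPolynomial (Fin n) K) ∈ varIdeal K A ↔ i ∈ A := by
  rw [mem_varIdeal_iff]
  simp [support_X, Finsupp.single_apply]

theorem monomial_mem_varIdeal {A : Finset (Fin n)} {d : Fin n →₀ ℕ} :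
    (monomial d (1:K)) ∈ varIdeal K A ↔ (d.support ∩ A).Nonempty := by
  classical
  rw [mem_varIdeal_iff]
  simp [support_monomial, Finset.Nonempty, and_comm]

theorem stanleySpace_eq (X Y : Finset (Fin n)) (h : X ⊆ Y) :
    stanleySpace K (Finsupp.indicator X (fun _ _ => 1)) Y =
      restrictSupport K {d : Fin n →₀ ℕ | X ⊆ d.support ∧ d.support ⊆ Y} := by
  classical
  rw [restrictSupport_eq_span]
  unfold stanleySpace
  congr 1
  ext f
  simp only [Set.mem_ofPred_eq, Set.mem_image]
  constructor
  · rintro ⟨e, he, rfl⟩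
    refine ⟨_, ⟨?_, ?_⟩, rfl⟩
    · intro i hi
      simp [Finsupp.indicator_apply, hi]
    · intro i hi
      simp only [Finsupp.mem_support_iff, Finsupp.add_apply, Finsupp.indicator_apply] at hi
      by_cases hX : i ∈ X
      · exact h hX
      · simp [hX] at hi
        exact he i hi
  · rintro ⟨d, ⟨h1, h2⟩, rfl⟩
    refine ⟨d - Finsupp.indicator X (fun _ _ => 1), ?_, ?_⟩
    · intro i hi
      apply h2
      rw [Finsupp.mem_support_iff]
      intro h0
      simp [h0] at hi
    · congr 1
      rw [add_tsub_cancel_of_le]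
      intro i
      by_cases hX : i ∈ X
      · have := h1 hX
        rw [Finsupp.mem_support_iff] at this
        simp [Finsupp.indicator_apply, hX]
        omega
      · simp [Finsupp.indicator_apply, hX]

theorem restrictSupport_iSup {ι : Type*} (s : ι → Set (Fin n →₀ ℕ)) :
    (⨆ i, restrictSupport K (s i)) = restrictSupport K (⋃ i, s i) := by
  apply le_antisymm
  · exact iSup_le fun i => restrictSupport_mono _ (Set.subset_iUnion _ _)
  · rw [restrictSupport_eq_span, Submodule.span_le]
    rintro _ ⟨d, hd, rfl⟩
    obtain ⟨i, hi⟩ := Set.mem_iUnion.1 hd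
    exact Submodule.mem_iSup_of_mem i ((monomial_mem_restrictSupport K).2 (Or.inl hi))

theorem restrictSupport_indep {ι : Type*} (s : ι → Set (Fin n →₀ ℕ))
    (h : ∀ i j d, d ∈ s i → d ∈ s j → i = j) :
    iSupIndep fun i => restrictSupport K (s i) := by
  intro i
  have : (⨆ j, ⨆ (_ : j ≠ i), restrictSupport K (s j)) ≤ restrictSupport K (s i)ᶜ := by
    refine iSup_le fun j => iSup_le fun hj => restrictSupport_mono _ ?_
    intro d hd hd'
    exact hj (h _ _ _ hd hd')
  refine Disjoint.mono_right this ?_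
  rw [Submodule.disjoint_def]
  intro f h1 h2
  rw [mem_restrictSupport_iff] at h1 h2
  rw [← support_eq_empty, Finset.eq_empty_iff_forall_notMem]
  intro d hd
  exact h2 hd (h1 hd)

theorem sdepth_ge (A B : Finset (Fin n)) (hd : Disjoint A B) (hu : A ∪ B = Finset.univ)
    (hA : A.Nonempty) (hB : B.Nonempty) :
    (A.card + 1) / 2 + (B.card + 1) / 2 ≤ sdepth (varIdeal K A ⊓ varIdeal K B) := by
  classical
  obtain ⟨XA, YA, hXA⟩ := interval_finset A
  obtain ⟨XB, YB, hXB⟩ := interval_finset B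
  have cup : ∀ S : Finset (Fin n), (S ∩ A) ∪ (S ∩ B) = S := by
    intro S; rw [← Finset.inter_union_distrib_left, hu, Finset.inter_univ]
  let F : Finset (Fin n) → Finset (Fin n) × Finset (Fin n) := fun S =>
    (XA (S ∩ A) ∪ XB (S ∩ B), YA (S ∩ A) ∪ YB (S ∩ B))
  let good : Finset (Fin n) → Prop := fun S => (S ∩ A).Nonempty ∧ (S ∩ B).Nonempty
  -- interval properties
  have capA : ∀ U V : Finset (Fin n), U ⊆ A → V ⊆ B → (U ∪ V) ∩ A = U := by
    intro U V hU hV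
    ext i
    have := @hU i
    have := @hV i
    have : i ∈ A → i ∉ B := fun h => Finset.disjoint_left.1 hd h
    simp only [Finset.mem_inter, Finset.mem_union]
    tauto
  have capB : ∀ U V : Finset (Fin n), U ⊆ A → V ⊆ B → (U ∪ V) ∩ B = V := by
    intro U V hU hV
    ext i
    have := @hU i
    have := @hV i
    have : i ∈ A → i ∉ B := fun h => Finset.disjoint_left.1 hd h
    simp only [Finset.mem_inter, Finset.mem_union]
    tauto
  have hF : ∀ S, good S → (F S).1 ⊆ S ∧ S ⊆ (F S).2 ∧ good (F S).1 ∧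
      (A.card + 1) / 2 + (B.card + 1) / 2 ≤ (F S).2.card ∧
      ∀ T, (F S).1 ⊆ T → T ⊆ (F S).2 → good T ∧ F T = F S := by
    intro S hS
    obtain ⟨a1, a2, a3, a4, a5, a6⟩ := hXA (S ∩ A) Finset.inter_subset_right hS.1
    obtain ⟨b1, b2, b3, b4, b5, b6⟩ := hXB (S ∩ B) Finset.inter_subset_right hS.2
    have a1' := a1.trans Finset.inter_subset_right
    have b1' := b1.trans Finset.inter_subset_right
    refine ⟨?_, ?_, ⟨?_, ?_⟩, ?_, ?_⟩
    · conv_rhs => rw [← cup S]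
      exact Finset.union_subset_union a1 b1
    · conv_lhs => rw [← cup S]
      exact Finset.union_subset_union a2 b2
    · rw [capA _ _ a1' b1']; exact a4
    · rw [capB _ _ a1' b1']; exact b4
    · rw [Finset.card_union_of_disjoint (Finset.disjoint_of_subset_left a3
        (Finset.disjoint_of_subset_right b3 hd))]
      omega
    · intro T h1 h2
      have tA1 : XA (S ∩ A) ⊆ T ∩ A := by
        rw [← capA _ _ a1' b1']; exact Finset.inter_subset_inter_right h1
      have tB1 : XB (S ∩ B) ⊆ T ∩ B := by
        rw [← capB _ _ a1' b1']; exact Finset.inter_subset_inter_right h1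
      have tA2 : T ∩ A ⊆ YA (S ∩ A) := by
        rw [← capA _ _ a3 b3]; exact Finset.inter_subset_inter_right h2
      have tB2 : T ∩ B ⊆ YB (S ∩ B) := by
        rw [← capB _ _ a3 b3]; exact Finset.inter_subset_inter_right h2
      refine ⟨⟨a4.mono tA1, b4.mono tB1⟩, ?_⟩
      simp only [F, a6 _ tA1 tA2, b6 _ tB1 tB2]
  let J : Finset (Finset (Fin n) × Finset (Fin n)) := (Finset.univ.filter good).image F
  have hJ : ∀ p ∈ J, ∃ S, good S ∧ F S = p := by
    intro p hp
    simpa [J] using hp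
  let e : Fin J.card ≃ J := J.equivFin.symm
  let s : Fin J.card → Set (Fin n →₀ ℕ) := fun i =>
    {d | (e i).1.1 ⊆ d.support ∧ d.support ⊆ (e i).1.2}
  have hs : ∀ i, stanleySpace K (Finsupp.indicator (e i).1.1 (fun _ _ => 1)) (e i).1.2 =
      restrictSupport K (s i) := by
    intro i
    obtain ⟨S, hS, hp⟩ := hJ _ (e i).2
    apply stanleySpace_eq
    rw [← hp]
    exact (hF S hS).1.trans (hF S hS).2.1
  have hgood : ∀ d : Fin n →₀ ℕ, good d.support ↔
      (monomial d (1:K)) ∈ varIdeal K A ⊓ varIdeal K B := by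
    intro d
    rw [Ideal.mem_inf, monomial_mem_varIdeal, monomial_mem_varIdeal]
  let D : StanleyDecomp K (varIdeal K A ⊓ varIdeal K B) :=
    { m := J.card
      u := fun i => Finsupp.indicator (e i).1.1 (fun _ _ => 1)
      Z := fun i => (e i).1.2
      mem := by
        intro i
        obtain ⟨S, hS, hp⟩ := hJ _ (e i).2
        rw [← hgood]
        have : (Finsupp.indicator (e i).1.1 (fun _ _ => 1) : Fin n →₀ ℕ).support = (e i).1.1 := by
          ext j
          simp [Finsupp.indicator_apply]
        rw [this, ← hp]
        exact (hF S hS).2.2.1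
      indep := by
        simp only [hs]
        apply restrictSupport_indep
        intro i j d hi hj
        obtain ⟨S, hS, hp⟩ := hJ _ (e i).2
        obtain ⟨T, hT, hq⟩ := hJ _ (e j).2
        have h1 := ((hF S hS).2.2.2.2 d.support (by rw [hp]; exact hi.1) (by rw [hp]; exact hi.2)).2
        have h2 := ((hF T hT).2.2.2.2 d.support (by rw [hq]; exact hj.1) (by rw [hq]; exact hj.2)).2
        apply e.injective
        apply Subtype.ext
        rw [← hp, ← hq, ← h1, ← h2]
      total := by
        simp only [hs]
        rw [restrictSupport_iSup]
        have hW : ∀ d, d ∈ (⋃ i, s i) ↔ good d.support := by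
          intro d
          rw [Set.mem_iUnion]
          constructor
          · rintro ⟨i, hi⟩
            obtain ⟨S, hS, hp⟩ := hJ _ (e i).2
            exact ((hF S hS).2.2.2.2 d.support (by rw [hp]; exact hi.1)
              (by rw [hp]; exact hi.2)).1
          · intro h
            have hm : F d.support ∈ J :=
              Finset.mem_image_of_mem _ (Finset.mem_filter.2 ⟨Finset.mem_univ _, h⟩)
            refine ⟨e.symm ⟨_, hm⟩, ?_⟩
            simp only [s, Equiv.apply_symm_apply, Set.mem_ofPred_eq]
            exact ⟨(hF _ h).1, (hF _ h).2.1⟩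
        ext f
        rw [mem_restrictSupport_iff, Submodule.restrictScalars_mem, Ideal.mem_inf,
          mem_varIdeal_iff, mem_varIdeal_iff]
        simp only [Set.subset_def, hW, good, Finset.Nonempty, Finset.mem_inter,
          Finsupp.mem_support_iff, Finset.mem_coe]
        constructor
        · intro h
          exact ⟨fun m hm => let ⟨i, a, b⟩ := (h m hm).1; ⟨i, b, a⟩,
            fun m hm => let ⟨i, a, b⟩ := (h m hm).2; ⟨i, b, a⟩⟩
        · rintro ⟨h1, h2⟩ m hm
          exact ⟨let ⟨i, a, b⟩ := h1 m hm; ⟨i, b, a⟩, let ⟨i, a, b⟩ := h2 m hm; ⟨i, b, a⟩⟩ }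
  unfold sdepth
  apply le_csSup
  · refine ⟨n, ?_⟩
    rintro k ⟨D, hD⟩
    by_cases hm : D.m = 0
    · exfalso
      have ht := D.total
      have : IsEmpty (Fin D.m) := by rw [hm]; infer_instance
      rw [iSup_of_empty] at ht
      obtain ⟨a, ha⟩ := hA
      obtain ⟨b, hb⟩ := hB
      have : (X a * X b : MvPolynomial (Fin n) K) ∈
          Submodule.restrictScalars K (varIdeal K A ⊓ varIdeal K B) :=
        ⟨Ideal.mul_mem_right _ _ (X_mem_varIdeal.2 ha),
          Ideal.mul_mem_left _ _ (X_mem_varIdeal.2 hb)⟩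
      rw [← ht, Submodule.mem_bot] at this
      rcases mul_eq_zero.1 this with h | h <;> exact X_ne_zero _ h
    · exact (hD ⟨0, by omega⟩).trans ((Finset.card_le_univ _).trans (by simp))
  · refine ⟨D, fun i => ?_⟩
    obtain ⟨S, hS, hp⟩ := hJ _ (e i).2
    change _ ≤ (e i).1.2.card
    rw [← hp]
    exact (hF S hS).2.2.2.1


theorem depth_le (A B : Finset (Fin n)) (hd : Disjoint A B) (hu : A ∪ B = Finset.univ)
    {a b : Fin n} (ha : a ∈ A) (hb : b ∈ B) (rs : List (MvPolynomial (Fin n) K))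
    (hm : ∀ r ∈ rs, r ∈ maxIdeal n K)
    (hr : RingTheory.Sequence.IsRegular ↥(varIdeal K A ⊓ varIdeal K B) rs) : rs.length ≤ 2 := by
  classical
  by_contra hlen
  obtain ⟨f, g, h, l, rfl⟩ : ∃ f g h l, rs = f :: g :: h :: l := by
    match rs, hlen with
    | [], h => simp at h
    | [_], h => simp at h
    | [_, _], h => simp at h
    | f :: g :: h :: l, _ => exact ⟨f, g, h, l, rfl⟩
  have haB : a ∉ B := Finset.disjoint_left.1 hd ha
  have hbA : b ∉ A := Finset.disjoint_right.1 hd hb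
  have hPp := varIdeal_isPrime (K := K) A
  have hQp := varIdeal_isPrime (K := K) B
  set P := varIdeal K A with hP
  set Q := varIdeal K B with hQ
  have hPQ : maxIdeal n K ≤ P ⊔ Q := by
    unfold maxIdeal varIdeal
    rw [Ideal.span_le]
    rintro _ ⟨i, -, rfl⟩
    have : i ∈ A ∪ B := by rw [hu]; exact Finset.mem_univ i
    rcases Finset.mem_union.1 this with h | h
    · exact Ideal.mem_sup_left (X_mem_varIdeal.2 h)
    · exact Ideal.mem_sup_right (X_mem_varIdeal.2 h)
  have hne : P ⊔ Q ≠ ⊤ := by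
    intro ht
    have h1 : (1 : MvPolynomial (Fin n) K) ∈ varIdeal K (Finset.univ : Finset (Fin n)) := by
      have hle : P ⊔ Q ≤ varIdeal K (Finset.univ : Finset (Fin n)) := by
        apply sup_le <;>
        · apply Ideal.span_mono
          apply Set.image_mono
          simp
      exact hle (ht ▸ Submodule.mem_top)
    exact (varIdeal_isPrime (K := K) (Finset.univ : Finset (Fin n))).ne_top
      ((Ideal.eq_top_iff_one _).2 h1)
  have w := hr.toIsWeaklyRegular.regular_mod_prev
  have w0 := (isSMulRegular_quotient_iff_mem_of_smul_mem _ _).1 (w 0 (by simp))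
  have w1 := (isSMulRegular_quotient_iff_mem_of_smul_mem _ _).1 (w 1 (by simp))
  have w2 := (isSMulRegular_quotient_iff_mem_of_smul_mem _ _).1 (w 2 (by simp))
  simp only [List.take_zero, List.take_succ_cons, List.getElem_cons_zero, List.getElem_cons_succ,
    Ideal.ofList_nil, Ideal.ofList_cons,
    Submodule.sup_smul, Submodule.bot_smul, sup_bot_eq, Submodule.ideal_span_singleton_smul,
    Submodule.mem_sup, Submodule.mem_smul_pointwise_iff_exists, Submodule.mem_bot,
    Submodule.mem_top, true_and] at w0 w1 w2
  -- elementary reformulations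
  have hf0 : f ≠ 0 := by
    intro h0
    have := w0 ⟨X a * X b, Ideal.mul_mem_right _ _ (X_mem_varIdeal.2 ha),
      Ideal.mul_mem_left _ _ (X_mem_varIdeal.2 hb)⟩ (by rw [h0, zero_smul])
    rw [Subtype.ext_iff] at this
    rcases mul_eq_zero.1 this with h | h <;> exact X_ne_zero _ h
  have v1 : ∀ c ∈ P ⊓ Q, ∀ k ∈ P ⊓ Q, g * c = f * k → ∃ t ∈ P ⊓ Q, c = f * t := by
    intro c hc k hk he
    obtain ⟨t, ht⟩ := w1 ⟨c, hc⟩ ⟨⟨k, hk⟩, Subtype.ext he.symm⟩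
    exact ⟨t.1, t.2, (congrArg Subtype.val ht).symm⟩
  have v2 : ∀ c ∈ P ⊓ Q, ∀ k ∈ P ⊓ Q, ∀ k' ∈ P ⊓ Q, h * c = f * k + g * k' →
      ∃ t ∈ P ⊓ Q, ∃ t' ∈ P ⊓ Q, c = f * t + g * t' := by
    intro c hc k hk k' hk' he
    obtain ⟨_, ⟨t, rfl⟩, _, ⟨t', rfl⟩, ht⟩ := w2 ⟨c, hc⟩
      ⟨_, ⟨⟨k, hk⟩, rfl⟩, _, ⟨⟨k', hk'⟩, rfl⟩, Subtype.ext he.symm⟩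
    exact ⟨t.1, t.2, t'.1, t'.2, (congrArg Subtype.val ht).symm⟩
  have dec : ∀ t ∈ maxIdeal n K, ∃ q ∈ Q, t - q ∈ P := by
    intro t ht
    obtain ⟨p, hp, q, hq, rfl⟩ := Submodule.mem_sup.1 (hPQ ht)
    exact ⟨q, hq, by simpa using hp⟩
  obtain ⟨fq, hfq, hfp⟩ := dec f (hm f (by simp))
  obtain ⟨gq, hgq, hgp⟩ := dec g (hm g (by simp))
  obtain ⟨hq, hhq, hhp⟩ := dec h (hm h (by simp))
  have cross : ∀ s sq t tq, sq ∈ Q → s - sq ∈ P → tq ∈ Q → t - tq ∈ P →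
      s * tq - t * sq ∈ P ⊓ Q := by
    intro s sq t tq h1 h2 h3 h4
    refine Ideal.mem_inf.2 ⟨?_, ?_⟩
    · have := sub_mem (Ideal.mul_mem_left P t h2) (Ideal.mul_mem_left P s h4)
      convert this using 1; ring
    · exact sub_mem (Ideal.mul_mem_left Q _ h3) (Ideal.mul_mem_left Q _ h1)
  obtain ⟨t, ht, t', ht', he⟩ := v2 _ (cross f fq g gq hfq hfp hgq hgp)
    _ (cross h hq g gq hhq hhp hgq hgp) _ (cross f fq h hq hfq hfp hhq hhp) (by ring)
  -- f * (gq - t) = g * (fq + t')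
  have he' : f * (gq - t) = g * (fq + t') := by linear_combination he
  obtain ⟨u, v, d, huv, hdu, hdv⟩ := UniqueFactorizationMonoid.exists_reduced_factors f hf0 g
  have hd0 : d ≠ 0 := by rintro rfl; exact hf0 (by rw [← hdu, zero_mul])
  have hu0 : u ≠ 0 := by rintro rfl; exact hf0 (by rw [← hdu, mul_zero])
  have hdI : P ⊓ Q ≤ Ideal.span {d} • (P ⊓ Q) := by
    intro c hc
    obtain ⟨k, hk, hk'⟩ := v1 (u * c) (Ideal.mul_mem_left _ _ hc) (v * c)
      (Ideal.mul_mem_left _ _ hc) (by rw [← hdu, ← hdv]; ring)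
    have : c = d * k := by
      apply mul_left_cancel₀ hu0
      rw [hk', ← hdu]; ring
    rw [this]
    exact Submodule.smul_mem_smul (Ideal.mem_span_singleton_self d) hk
  obtain ⟨ρ, hρ, hρ'⟩ := Submodule.exists_sub_one_mem_and_smul_eq_zero_of_fg_of_le_smul _ _
    (IsNoetherian.noetherian (P ⊓ Q)) hdI
  have hab : (X a * X b : MvPolynomial (Fin n) K) ∈ P ⊓ Q :=
    ⟨Ideal.mul_mem_right _ _ (X_mem_varIdeal.2 ha), Ideal.mul_mem_left _ _ (X_mem_varIdeal.2 hb)⟩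
  have hρ0 : ρ = 0 := by
    rcases mul_eq_zero.1 (hρ' _ hab) with h | h
    · exact h
    · rcases mul_eq_zero.1 h with h | h <;> exact absurd h (X_ne_zero _)
  have hdu' : IsUnit d := by
    rw [hρ0, Ideal.mem_span_singleton] at hρ
    exact isUnit_of_dvd_one (by simpa using hρ)
  have hudvd : u ∣ fq + t' := by
    apply huv.dvd_of_dvd_mul_left
    refine ⟨gq - t, ?_⟩
    apply mul_left_cancel₀ hd0
    rw [← mul_assoc, ← mul_assoc, hdv, hdu, he']
  have hfdvd : f ∣ fq + t' := by
    rw [← hdu]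
    exact hdu'.mul_left_dvd.2 hudvd
  obtain ⟨s, hs⟩ := hfdvd
  have hs2 : gq - t = g * s := by
    apply mul_left_cancel₀ hf0
    rw [he', hs]; ring
  have notboth : ∀ (J : Ideal (MvPolynomial (Fin n) K)) (x : MvPolynomial (Fin n) K),
      (∀ z ∈ J, z * x ∈ P ⊓ Q) → x ∉ P ⊓ Q → f ∈ J → g ∉ J := by
    intro J x hJ hx hfJ hgJ
    obtain ⟨k, hk, hk'⟩ := v1 (f * x) (hJ f hfJ) (g * x) (hJ g hgJ) (by ring)
    exact hx (mul_left_cancel₀ hf0 hk' ▸ hk)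
  have nP := notboth P (X b) (fun z hz => ⟨Ideal.mul_mem_right _ _ hz,
    Ideal.mul_mem_left _ _ (X_mem_varIdeal.2 hb)⟩) (fun hx => hbA (X_mem_varIdeal.1 hx.1))
  have nQ := notboth Q (X a) (fun z hz => ⟨Ideal.mul_mem_left _ _ (X_mem_varIdeal.2 ha),
    Ideal.mul_mem_right _ _ hz⟩) (fun hx => haB (X_mem_varIdeal.1 hx.2))
  have sP : 1 - s ∈ P := by
    have e1 : f * (1 - s) ∈ P := by
      have := sub_mem hfp ht'.1
      convert this using 1
      linear_combination hs
    have e2 : g * (1 - s) ∈ P := by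
      have := add_mem hgp ht.1
      convert this using 1
      linear_combination hs2
    by_cases hfP : f ∈ P
    · exact (hPp.mem_or_mem e2).resolve_left (nP hfP)
    · exact (hPp.mem_or_mem e1).resolve_left hfP
  have sQ : s ∈ Q := by
    have e1 : f * s ∈ Q := hs ▸ add_mem hfq ht'.2
    have e2 : g * s ∈ Q := hs2 ▸ sub_mem hgq ht.2
    by_cases hfQ : f ∈ Q
    · exact (hQp.mem_or_mem e2).resolve_left (nQ hfQ)
    · exact (hQp.mem_or_mem e1).resolve_left hfQ
  apply hne
  rw [Ideal.eq_top_iff_one]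
  have := Submodule.add_mem_sup sP sQ
  simpa using this

theorem depth_ge (A B : Finset (Fin n)) (hd : Disjoint A B)
    {a b : Fin n} (ha : a ∈ A) (hb : b ∈ B) :
    RingTheory.Sequence.IsRegular ↥(varIdeal K A ⊓ varIdeal K B)
      [X a + X b, (X a : MvPolynomial (Fin n) K)] := by
  classical
  have haB : a ∉ B := Finset.disjoint_left.1 hd ha
  have hbA : b ∉ A := Finset.disjoint_right.1 hd hb
  have hne : a ≠ b := fun h => haB (h ▸ hb)
  have hPp := varIdeal_isPrime (K := K) A
  have hQp := varIdeal_isPrime (K := K) B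
  have hfP : (X a + X b : MvPolynomial (Fin n) K) ∉ varIdeal K A := by
    intro h
    have := sub_mem h (X_mem_varIdeal.2 ha)
    rw [add_sub_cancel_left] at this
    exact hbA (X_mem_varIdeal.1 this)
  have hfQ : (X a + X b : MvPolynomial (Fin n) K) ∉ varIdeal K B := by
    intro h
    have := sub_mem h (X_mem_varIdeal.2 hb)
    rw [add_sub_cancel_right] at this
    exact haB (X_mem_varIdeal.1 this)
  have hf0 : (X a + X b : MvPolynomial (Fin n) K) ≠ 0 := fun h => hfP (h ▸ zero_mem _)
  have hab : (X a * X b : MvPolynomial (Fin n) K) ∈ varIdeal K A ⊓ varIdeal K B :=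
    ⟨Ideal.mul_mem_right _ _ (X_mem_varIdeal.2 ha), Ideal.mul_mem_left _ _ (X_mem_varIdeal.2 hb)⟩
  refine ⟨⟨?_⟩, ?_⟩
  · intro i hi
    have hi' : i = 0 ∨ i = 1 := by simp at hi; omega
    rcases hi' with rfl | rfl
    · rw [isSMulRegular_quotient_iff_mem_of_smul_mem]
      simp only [List.take_zero, List.getElem_cons_zero,
        Ideal.ofList_nil, Submodule.bot_smul,
        Submodule.mem_bot]
      intro x hx
      apply Subtype.ext
      have := congrArg Subtype.val hx
      exact (mul_eq_zero.1 this).resolve_left hf0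
    · rw [isSMulRegular_quotient_iff_mem_of_smul_mem]
      simp only [List.take_zero, List.take_succ_cons, List.getElem_cons_zero,
        List.getElem_cons_succ,
        Ideal.ofList_nil, Ideal.ofList_cons,
        sup_bot_eq, Submodule.ideal_span_singleton_smul,
        Submodule.mem_smul_pointwise_iff_exists, Submodule.mem_top, true_and]
      rintro ⟨c, hc⟩ ⟨⟨k, hk⟩, he⟩
      have he : (X a + X b) * k = X a * c := congrArg Subtype.val he
      have hp : Prime (X a : MvPolynomial (Fin n) K) := MvPolynomial.X_prime
      have hdvd : X a ∣ k := by
        refine (hp.dvd_or_dvd ⟨c, he⟩).resolve_left ?_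
        intro h
        have : (X a + X b : MvPolynomial (Fin n) K) ∈ varIdeal K A := by
          obtain ⟨z, hz⟩ := h
          rw [hz]
          exact Ideal.mul_mem_right _ _ (X_mem_varIdeal.2 ha)
        exact hfP this
      obtain ⟨z, rfl⟩ := hdvd
      have hcz : c = (X a + X b) * z := by
        apply mul_left_cancel₀ (X_ne_zero (R := K) a)
        rw [← he]; ring
      refine ⟨⟨z, ?_⟩, Subtype.ext hcz.symm⟩
      rw [hcz] at hc
      exact ⟨(hPp.mem_or_mem hc.1).resolve_left hfP, (hQp.mem_or_mem hc.2).resolve_left hfQ⟩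
  · intro htop
    have h1 : (⟨X a * X b, hab⟩ : ↥(varIdeal K A ⊓ varIdeal K B)) ∈
      (Ideal.ofList [X a + X b, (X a : MvPolynomial (Fin n) K)] • ⊤ :
        Submodule (MvPolynomial (Fin n) K) ↥(varIdeal K A ⊓ varIdeal K B)) := htop ▸ Submodule.mem_top
    simp only [Ideal.ofList_nil, Ideal.ofList_cons,
      Submodule.sup_smul, Submodule.bot_smul, sup_bot_eq, Submodule.ideal_span_singleton_smul,
      Submodule.mem_sup, Submodule.mem_smul_pointwise_iff_exists,
      Submodule.mem_top, true_and] at h1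
    obtain ⟨_, ⟨⟨k, hk⟩, rfl⟩, _, ⟨⟨k', hk'⟩, rfl⟩, he⟩ := h1
    have he : (X a + X b) * k + X a * k' = X a * X b := congrArg Subtype.val he
    have key : ∀ (i : Fin n) (z : MvPolynomial (Fin n) K), z ∈ varIdeal K A ⊓ varIdeal K B →
        coeff (Finsupp.single a 1 + Finsupp.single b 1) (X i * z) = 0 := by
      intro i z hz
      rw [coeff_X_mul']
      split_ifs with hi
      · by_contra hc
        obtain ⟨i1, hi1, hi1'⟩ := mem_varIdeal_iff.1 hz.1 _ (mem_support_iff.2 hc)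
        obtain ⟨i2, hi2, hi2'⟩ := mem_varIdeal_iff.1 hz.2 _ (mem_support_iff.2 hc)
        have hi1b : i1 ≠ b := fun h => hbA (h ▸ hi1)
        have hi2a : i2 ≠ a := fun h => haB (h ▸ hi2)
        by_cases hia : i = a
        · subst hia
          apply hi1'
          simp [Finsupp.single_eq_of_ne hi1b]
        · by_cases hib : i = b
          · subst hib
            apply hi2'
            simp [Finsupp.single_eq_of_ne hi2a]
          · simp [Finsupp.single_eq_of_ne hia, Finsupp.single_eq_of_ne hib] at hi
      · rfl
    have hc := congrArg (coeff (Finsupp.single a 1 + Finsupp.single b 1)) he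
    rw [add_mul, coeff_add, coeff_add, key _ _ hk, key _ _ hk, key _ _ hk', coeff_X_mul,
      coeff_X] at hc
    simp at hc

end PrimesAux

theorem depth_sdepth_two_disjoint_primes {K : Type*} [Field K] (n r : ℕ)
    (A B : Finset (Fin n)) (hd : Disjoint A B) (hu : A ∪ B = Finset.univ)
    (hA : A.card = r) (h1 : 1 ≤ r) (h2 : r < n) :
    moduleDepth (MvPolynomial (Fin n) K) (maxIdeal n K)
        ↥(varIdeal K A ⊓ varIdeal K B) = 2 ∧
      sdepth (varIdeal K A ⊓ varIdeal K B) ≥ (r + 1) / 2 + (n - r + 1) / 2 ∧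
      (r + 1) / 2 + (n - r + 1) / 2 ≥ 2 := by
  have hcard : A.card + B.card = n := by
    rw [← Finset.card_union_of_disjoint hd, hu]; simp
  have hAne : A.Nonempty := Finset.card_pos.1 (by omega)
  have hBne : B.Nonempty := Finset.card_pos.1 (by omega)
  refine ⟨?_, ?_, by omega⟩
  · obtain ⟨a, ha⟩ := hAne
    obtain ⟨b, hb⟩ := hBne
    unfold moduleDepth
    apply IsGreatest.csSup_eq
    constructor
    · refine ⟨_, rfl, ?_, depth_ge A B hd ha hb⟩
      have hX : ∀ i, (X i : MvPolynomial (Fin n) K) ∈ maxIdeal n K := fun i =>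
        X_mem_varIdeal.2 (Finset.mem_univ i)
      intro p hp
      simp only [List.mem_cons, List.not_mem_nil, or_false] at hp
      rcases hp with rfl | rfl
      · exact add_mem (hX a) (hX b)
      · exact hX a
    · rintro k ⟨rs, rfl, hm, hr⟩
      exact depth_le A B hd hu ha hb rs hm hr
  · have := sdepth_ge (K := K) A B hd hu hAne hBne
    have hB' : B.card = n - r := by omega
    rw [hA, hB'] at this
    exact this
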